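/- Let p be a prime and let H be a nontrivial abelian finite group acting faithfully on a faithful irreducible module V of order p^a over the field of p elements, and let k be a subfield of the complex numbers containing the primitive pth roots of unity. If G = V ⋊ H, then acd_k(G) ≥ 2(p + 1)/(p + 3). -/

import Mathlib

open scoped BigOperators

/-- The set of irreducible complex characters of `G`, viewed as functions `G → ℂ`. -/
def Irr (G : Type) [Monoid G] : Set (G → ℂ) :=
  {f | ∃ V : FDRep ℂ G, CategoryTheory.Simple V ∧ f = V.character}

/-- The degree of a character, i.e. its value at the identity (a natural number). -/
noncomputable def charDeg {G : Type} [One G] (f : G → ℂ) : ℕ := ⌊(f 1).re⌋₊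

/-- The average of the degrees of the characters in a set `S` of characters. -/
noncomputable def acd {G : Type} [One G] (S : Set (G → ℂ)) : ℝ :=
  (∑ᶠ f ∈ S, (f 1).re) / (S.ncard : ℝ)

/-- `G` has a normal `p`-complement: a normal subgroup of order coprime to `p`
whose index is a power of `p`. -/
def HasNormalPComplement (p : ℕ) (G : Type) [Group G] : Prop :=
  ∃ N : Subgroup G, N.Normal ∧ Nat.Coprime (Nat.card N) p ∧ ∃ n : ℕ, N.index = p ^ n

/-!
Conjugation by `h ≠ 1` fixes no nontrivial element of `V`, so `v ↦ v / φ h v` is a bijection of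
`V`. Hence every linear character of `V ⋊ H` is trivial on `V`, which leaves at most `|H|` of them,
and `H` acts freely on the nontrivial linear characters of `V`. Inducing these gives `m` irreducible
characters of degree `|H|` with `|V| ≤ |H| m + 1`, whose values are sums of roots of unity of order
dividing the exponent of `V` and so lie in `k`. All nonlinear characters have degree at least `2`,
which exceeds the bound `c` obtained by replacing `|V|` with `|H| m + 1`, so that only the `m`
induced characters and the at most `|H|` linear ones matter: the claim becomes
`m (|H| - c) + |H| (1 - c) ≥ 0`.
-/

open CategoryTheory MonoidHom Module Finset

section IrreducibleCharacters

variable {G : Type} [Group G]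

theorem sum_mul_inv_eq_zero_of_mem_irr [Fintype G] {f g : G → ℂ} (hf : f ∈ Irr G) (hg : g ∈ Irr G)
    (hne : f ≠ g) : ∑ x, f x * g x⁻¹ = 0 := by
  obtain ⟨V, _, rfl⟩ := hf
  obtain ⟨W, _, rfl⟩ := hg
  have := invertibleOfNonzero (NeZero.ne (Nat.card G : ℂ))
  have hiso : ¬ Nonempty (V ≅ W) := fun ⟨i⟩ => hne (FDRep.char_iso i)
  simpa [hiso] using FDRep.char_orthonormal V W

theorem sum_mul_inv_self_of_mem_irr [Fintype G] {f : G → ℂ} (hf : f ∈ Irr G) :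
    ∑ x, f x * f x⁻¹ = Nat.card G := by
  obtain ⟨V, hV, rfl⟩ := hf
  exact V.simple_iff_char_is_norm_one.mp hV

theorem linearIndependent_irr [Finite G] : LinearIndependent ℂ ((↑) : Irr G → G → ℂ) := by
  have := Fintype.ofFinite G
  let B := (dotProductBilin ℂ ℂ).compl₂ (LinearMap.funLeft ℂ ℂ (Inv.inv : G → G))
  refine LinearMap.linearIndependent_of_isOrthoᵢ (B := B) (fun f g hne => ?_) fun f => ?_
  · exact sum_mul_inv_eq_zero_of_mem_irr f.2 g.2 (Subtype.coe_injective.ne hne)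
  · exact (sum_mul_inv_self_of_mem_irr f.2).trans_ne (NeZero.ne _)

theorem finite_irr [Finite G] : (Irr G).Finite :=
  Set.finite_coe_iff.mp linearIndependent_irr.finite

theorem finrank_pos_of_simple {k : Type*} [Field k] {M : Type*} [Monoid M] (V : FDRep k M)
    [Simple V] : 0 < finrank k V := by
  by_contra! h
  have : Subsingleton V := finrank_zero_iff.mp (Nat.le_zero.mp h)
  exact id_nonzero V (by ext v; exact Subsingleton.elim _ _)

theorem exists_character_eq_of_finrank_eq_one {k : Type*} [Field k] {G : Type*} [Group G]
    {V : FDRep k G} (hV : finrank k V = 1) : ∃ χ : G →* kˣ, ∀ g, V.character g = χ g := by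
  choose c hc using fun g => (V.ρ g).existsUnique_eq_smul_id_of_finrank_eq_one hV |>.exists
  have hchar (g : G) : V.character g = c g := by simp [FDRep.character, hc, hV]
  have hmul (g g' : G) : c (g * g') = c g * c g' := by
    rw [← hchar (g * g'), FDRep.character, map_mul, hc g, hc g', smul_mul_smul_comm]
    simp [hV, ← Module.End.one_eq_id]
  let χ : G →* k :=
    { toFun := c
      map_one' := by rw [← hchar, FDRep.char_one, hV, Nat.cast_one]
      map_mul' := hmul }
  exact ⟨χ.toHomUnits, hchar⟩

theorem re_apply_one_eq_one_or_two_le {f : G → ℂ} (hf : f ∈ Irr G) :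
    (f 1).re = 1 ∨ 2 ≤ (f 1).re := by
  obtain ⟨V, _, rfl⟩ := hf
  rw [FDRep.char_one, Complex.natCast_re]
  norm_cast
  have := finrank_pos_of_simple V
  lia

theorem exists_monoidHom_eq_of_re_apply_one_eq_one {f : G → ℂ} (hf : f ∈ Irr G)
    (h1 : (f 1).re = 1) : ∃ χ : G →* ℂˣ, f = fun g => (χ g : ℂ) := by
  obtain ⟨V, _, rfl⟩ := hf
  rw [FDRep.char_one, Complex.natCast_re, Nat.cast_eq_one] at h1
  obtain ⟨χ, hχ⟩ := exists_character_eq_of_finrank_eq_one h1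
  exact ⟨χ, funext hχ⟩

end IrreducibleCharacters

section LinearCharacters

theorem natCard_monoidHom_units_le (G R : Type*) [Group G] [Finite G] [CommRing R] [IsDomain R] :
    Nat.card (G →* Rˣ) ≤ Nat.card G := by
  have := Fintype.ofFinite G
  have := Fintype.ofFinite (G →* Rˣ)
  have hinj : Function.Injective fun χ : G →* Rˣ => (Units.coeHom R).comp χ :=
    fun _ _ h => MonoidHom.cancel_left Units.val_injective |>.mp h
  simpa using ((linearIndependent_monoidHom G R).comp _ hinj).fintype_card_le_finrank

theorem sum_monoidHom_units_mul_inv {N R : Type*} [Group N] [Fintype N] [CommRing R] [IsDomain R]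
    (χ ψ : N →* Rˣ) [Decidable (χ = ψ)] :
    ∑ v, (χ v * ψ v⁻¹ : R) = if χ = ψ then (Nat.card N : R) else 0 := by
  classical
  have hiff : (Units.coeHom R).comp (χ / ψ) = 1 ↔ χ = ψ := by
    simp [MonoidHom.ext_iff, div_eq_one]
  simpa [hiff, div_eq_mul_inv] using sum_hom_units ((Units.coeHom R).comp (χ / ψ))

theorem monoidHom_units_apply_mem {N F : Type*} [Group N] [Finite N] [Field F] [IsAlgClosed F]
    [CharZero F] {k : Subfield F} (hk : ∀ ζ : F, IsPrimitiveRoot ζ (Monoid.exponent N) → ζ ∈ k)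
    (χ : N →* Fˣ) (v : N) : (χ v : F) ∈ k := by
  have : NeZero (Monoid.exponent N) := ⟨Monoid.exponent_ne_zero_of_finite⟩
  obtain ⟨ζ, hζ⟩ := HasEnoughRootsOfUnity.exists_primitiveRoot F (Monoid.exponent N)
  have hv : (χ v : F) ^ Monoid.exponent N = 1 := by
    rw [← Units.val_pow_eq_pow_val, ← map_pow, Monoid.pow_exponent_eq_one, map_one, Units.val_one]
  obtain ⟨i, -, hi⟩ := hζ.eq_pow_of_pow_eq_one hv
  exact hi ▸ pow_mem (hk ζ hζ) i

end LinearCharacters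

section SemidirectProduct

variable {N H : Type*} [Group N] [Group H] {φ : H →* MulAut N}

theorem hom_inl_eq_one_of_fixedPointFree [Finite N] {A : Type*} [CommGroup A] {h : H}
    (hh : FixedPointFree (φ h)) (F : N ⋊[φ] H →* A) (n : N) : F (SemidirectProduct.inl n) = 1 := by
  obtain ⟨w, rfl⟩ := hh.commutatorMap_surjective n
  simp [SemidirectProduct.inl_aut]

theorem hom_comp_inr_injective_of_fixedPointFree [Finite N] {A : Type*} [CommGroup A] {h : H}
    (hh : FixedPointFree (φ h)) :
    Function.Injective fun F : N ⋊[φ] H →* A => F.comp SemidirectProduct.inr := by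
  refine fun F F' hF => SemidirectProduct.hom_ext (MonoidHom.ext fun n => ?_) hF
  simp [hom_inl_eq_one_of_fixedPointFree hh]

end SemidirectProduct

section InducedCharacters

variable {N H K : Type*} [Group N] [Group H] [Field K] (φ : H →* MulAut N)

/-- The conjugate of the linear character `χ` of `N` by `y : H`, i.e. `n ↦ χ (φ y n)`. -/
def conjChar (χ : N →* Kˣ) (y : H) : N →* Kˣ := χ.comp (φ y).toMonoidHom

@[simp]
theorem conjChar_apply (χ : N →* Kˣ) (y : H) (n : N) : conjChar φ χ y n = χ (φ y n) := rfl

theorem conjChar_injective_of_fixedPointFree [Finite N] {φ : H →* MulAut N}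
    (hφ : ∀ h ≠ 1, FixedPointFree (φ h))
    {χ : N →* Kˣ} (hχ : χ ≠ 1) : Function.Injective (conjChar φ χ) := by
  intro y z hyz
  by_contra hne
  refine hχ (MonoidHom.ext fun n => ?_)
  have hfree := hφ (y * z⁻¹) (by rwa [Ne, mul_inv_eq_one])
  obtain ⟨w, rfl⟩ := hfree.commutatorMap_surjective n
  have hw := DFunLike.congr_fun hyz (φ z⁻¹ w)
  simp only [conjChar_apply, ← MulAut.mul_apply, ← map_mul, mul_inv_cancel, map_one,
    MulAut.one_apply] at hw
  rw [commutatorMap_apply, map_div, hw, div_self', one_apply]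

/-- The representation of `N ⋊[φ] H` induced from the linear character `χ` of `N`, realised on the
functions on `H`, which is a set of representatives of the cosets of `N`. -/
def inducedRep (χ : N →* Kˣ) : Representation K (N ⋊[φ] H) (H → K) where
  toFun g :=
    { toFun := fun f y => conjChar φ χ y g.left * f (y * g.right)
      map_add' := fun f f' => by ext y; simp [mul_add]
      map_smul' := fun c f => by ext y; simp [mul_left_comm] }
  map_one' := by ext; simp
  map_mul' g g' := by ext; simp [mul_assoc]

theorem inducedRep_apply (χ : N →* Kˣ) (g : N ⋊[φ] H) (f : H → K) (y : H) :
    inducedRep φ χ g f y = conjChar φ χ y g.left * f (y * g.right) := rfl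

/-- The character of `N ⋊[φ] H` induced from the linear character `χ` of `N`. -/
noncomputable def inducedChar (χ : N →* Kˣ) : N ⋊[φ] H → K :=
  (inducedRep φ χ).character

theorem inducedChar_apply [Fintype H] [DecidableEq H] (χ : N →* Kˣ) (g : N ⋊[φ] H) :
    inducedChar φ χ g = if g.right = 1 then ∑ y, (conjChar φ χ y g.left : K) else 0 := by
  change LinearMap.trace K (H → K) (inducedRep φ χ g) = _
  rw [LinearMap.trace_eq_matrix_trace K (Pi.basisFun K H), LinearMap.toMatrix_eq_toMatrix',
    Matrix.trace]
  have hdiag (y : H) : (LinearMap.toMatrix' (inducedRep φ χ g)).diag y =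
      if g.right = 1 then (conjChar φ χ y g.left : K) else 0 := by
    simp [LinearMap.toMatrix'_apply, inducedRep_apply, Pi.single_apply]
  simp only [hdiag]
  split_ifs <;> simp

theorem inducedChar_inl [Fintype H] (χ : N →* Kˣ) (n : N) :
    inducedChar φ χ (SemidirectProduct.inl n) = ∑ y, (conjChar φ χ y n : K) := by
  classical
  simp [inducedChar_apply]

theorem inducedChar_of_right_ne_one [Finite H] (χ : N →* Kˣ) {g : N ⋊[φ] H} (hg : g.right ≠ 1) :
    inducedChar φ χ g = 0 := by
  classical
  have := Fintype.ofFinite H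
  rw [inducedChar_apply, if_neg hg]

theorem inducedChar_one [Finite H] (χ : N →* Kˣ) : inducedChar φ χ 1 = Nat.card H := by
  classical
  have := Fintype.ofFinite H
  simp [inducedChar_apply]

theorem inducedChar_mem [Finite N] [Finite H] [CharZero K] [IsAlgClosed K] {k : Subfield K}
    (hk : ∀ ζ : K, IsPrimitiveRoot ζ (Monoid.exponent N) → ζ ∈ k) (χ : N →* Kˣ) (g : N ⋊[φ] H) :
    inducedChar φ χ g ∈ k := by
  classical
  have := Fintype.ofFinite H
  rw [inducedChar_apply]
  split_ifs
  · exact k.sum_mem fun y _ => monoidHom_units_apply_mem hk _ _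
  · exact k.zero_mem

theorem sum_inducedChar_inl_mul_inv [Fintype N] [Fintype H] [DecidableEq (N →* Kˣ)]
    (χ ψ : N →* Kˣ) :
    ∑ n, inducedChar φ χ (SemidirectProduct.inl n) * (ψ n⁻¹ : K) =
      Nat.card N * #{y | conjChar φ χ y = ψ} := by
  simp_rw [inducedChar_inl, Finset.sum_mul]
  rw [Finset.sum_comm]
  simp_rw [sum_monoidHom_units_mul_inv]
  rw [← Finset.sum_filter, Finset.sum_const, nsmul_eq_mul, mul_comm]

theorem exists_conjChar_eq_of_inducedChar_eq [Finite N] [Finite H] [CharZero K] {χ ψ : N →* Kˣ}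
    (h : inducedChar φ χ = inducedChar φ ψ) : ∃ y, conjChar φ χ y = ψ := by
  classical
  have := Fintype.ofFinite N
  have := Fintype.ofFinite H
  have hcard : #{y | conjChar φ χ y = ψ} = #{y | conjChar φ ψ y = ψ} := by
    have := sum_inducedChar_inl_mul_inv φ χ ψ
    rw [h, sum_inducedChar_inl_mul_inv] at this
    exact_mod_cast (mul_left_cancel₀ (NeZero.ne (Nat.card N : K)) this).symm
  have hpos : 0 < #{y | conjChar φ χ y = ψ} := by
    rw [hcard]
    exact Finset.card_pos.mpr ⟨1, by simp [MonoidHom.ext_iff]⟩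
  obtain ⟨y, hy⟩ := Finset.card_pos.mp hpos
  exact ⟨y, (Finset.mem_filter.mp hy).2⟩

theorem sum_inducedChar_mul_inv [Fintype N] [Finite H] [Fintype (N ⋊[φ] H)] (χ ψ : N →* Kˣ) :
    ∑ g, inducedChar φ χ g * inducedChar φ ψ g⁻¹ =
      ∑ n, inducedChar φ χ (SemidirectProduct.inl n) *
        inducedChar φ ψ (SemidirectProduct.inl n⁻¹) := by
  have := Fintype.ofFinite H
  rw [← SemidirectProduct.equivProd.symm.sum_comp, Fintype.sum_prod_type_right,
    Fintype.sum_eq_single (1 : H) fun h hh =>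
      Finset.sum_eq_zero fun n _ => by rw [inducedChar_of_right_ne_one φ χ hh, zero_mul]]
  simp only [map_inv]
  rfl

theorem natCard_monoidHom_le_card_mul_ncard_inducedChar [Finite N] [Finite H] [CharZero K] :
    Nat.card (N →* Kˣ) ≤ Nat.card H * (inducedChar (K := K) φ '' {1}ᶜ).ncard + 1 := by
  classical
  have := Fintype.ofFinite H
  have := Fintype.ofFinite (N →* Kˣ)
  have hfiber : ∀ f ∈ ({1}ᶜ : Finset (N →* Kˣ)).image (inducedChar φ),
      #{ψ ∈ ({1}ᶜ : Finset (N →* Kˣ)) | inducedChar φ ψ = f} ≤ Nat.card H := by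
    intro f hf
    obtain ⟨χ, -, rfl⟩ := Finset.mem_image.mp hf
    calc #{ψ ∈ ({1}ᶜ : Finset (N →* Kˣ)) | inducedChar φ ψ = inducedChar φ χ}
        ≤ #(Finset.univ.image (conjChar φ χ)) := Finset.card_le_card fun ψ hψ => by
          obtain ⟨y, rfl⟩ :=
            exists_conjChar_eq_of_inducedChar_eq φ (Finset.mem_filter.mp hψ).2.symm
          exact Finset.mem_image_of_mem _ (Finset.mem_univ y)
      _ ≤ Nat.card H := Finset.card_image_le.trans_eq (by simp)
  have hle := Finset.card_le_mul_card_image _ _ hfiber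
  rw [Finset.card_compl, Finset.card_singleton, ← Set.ncard_coe_finset, ← Nat.card_eq_fintype_card]
    at hle
  simp only [Finset.coe_image, Finset.coe_compl, Finset.coe_singleton] at hle
  lia

theorem inducedChar_mem_irr {N H : Type} [Group N] [Finite N] [Group H] [Finite H]
    {φ : H →* MulAut N} (hφ : ∀ h ≠ 1, FixedPointFree (φ h))
    {χ : N →* ℂˣ} (hχ : χ ≠ 1) : inducedChar φ χ ∈ Irr (N ⋊[φ] H) := by
  have := Fintype.ofFinite N
  have := Fintype.ofFinite H
  have : Fintype (N ⋊[φ] H) := Fintype.ofEquiv _ SemidirectProduct.equivProd.symm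
  refine ⟨FDRep.of (inducedRep φ χ), (FDRep.simple_iff_char_is_norm_one _).mpr ?_, rfl⟩
  change ∑ g, inducedChar φ χ g * inducedChar φ χ g⁻¹ = _
  have hfiber (z : H) : ({y | conjChar φ χ y = conjChar φ χ z} : Finset H) = {z} := by
    ext y
    simp [(conjChar_injective_of_fixedPointFree hφ hχ).eq_iff]
  calc ∑ g, inducedChar φ χ g * inducedChar φ χ g⁻¹
      = ∑ z, ∑ n, inducedChar φ χ (SemidirectProduct.inl n) * (conjChar φ χ z n⁻¹ : ℂ) := by
        rw [sum_inducedChar_mul_inv, Finset.sum_comm]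
        simp_rw [inducedChar_inl φ χ (_)⁻¹, Finset.mul_sum]
    _ = ∑ _ : H, (Nat.card N : ℂ) := by
        simp_rw [sum_inducedChar_inl_mul_inv, hfiber, Finset.card_singleton, Nat.cast_one, mul_one]
    _ = Nat.card (N ⋊[φ] H) := by
        rw [SemidirectProduct.card, Nat.cast_mul, mul_comm]
        simp

end InducedCharacters

section AverageDegree

theorem acd_coe_finset {G : Type} [One G] (T : Finset (G → ℂ)) :
    acd (T : Set (G → ℂ)) = (∑ f ∈ T, (f 1).re) / #T := by
  rw [acd, finsum_mem_coe_finset, Set.ncard_coe_finset]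

theorem two_mul_add_one_div_add_three_le {x y : ℝ} (hx : 0 ≤ x) (hxy : x ≤ y) :
    2 * (x + 1) / (x + 3) ≤ 2 * (y + 1) / (y + 3) := by
  rw [div_le_div_iff₀ (by linarith) (by linarith)]
  linarith

theorem le_sum_sub_of_eq_one_or_two_le {ι : Type*} {T A : Finset ι} {d : ι → ℝ} {h c : ℝ}
    (hAT : A ⊆ T) (hh : 2 ≤ h) (hdA : ∀ i ∈ A, d i = h) (hdT : ∀ i ∈ T, d i = 1 ∨ 2 ≤ d i)
    (hc : c ≤ 2) :
    #A * (h - c) + #{i ∈ T | d i = 1} * (1 - c) ≤ ∑ i ∈ T, (d i - c) := by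
  classical
  have hdisj : Disjoint A {i ∈ T | d i = 1} := Finset.disjoint_left.mpr fun i hiA hi => by
    linarith [hdA i hiA, (Finset.mem_filter.mp hi).2]
  calc #A * (h - c) + #{i ∈ T | d i = 1} * (1 - c)
      = ∑ i ∈ A, (d i - c) + ∑ i ∈ T with d i = 1, (d i - c) := by
        rw [Finset.sum_congr rfl fun i hi => by rw [hdA i hi], Finset.sum_const, nsmul_eq_mul,
          Finset.sum_congr rfl fun i hi => by rw [(Finset.mem_filter.mp hi).2], Finset.sum_const,
          nsmul_eq_mul]
    _ = ∑ i ∈ A ∪ {i ∈ T | d i = 1}, (d i - c) := (Finset.sum_union hdisj).symm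
    _ ≤ ∑ i ∈ T, (d i - c) := by
        refine Finset.sum_le_sum_of_subset_of_nonneg
          (Finset.union_subset hAT (Finset.filter_subset _ _)) fun i hi hiA => ?_
        have hi1 : d i ≠ 1 := fun h1 =>
          hiA (Finset.mem_union_right _ (Finset.mem_filter.mpr ⟨hi, h1⟩))
        linarith [(hdT i hi).resolve_left hi1]

theorem mul_sub_add_mul_one_sub_nonneg {h m c : ℝ} (hh : 2 ≤ h) (hm : 1 ≤ m)
    (hc : c = 2 * (h * m + 1 + 1) / (h * m + 1 + 3)) : 0 ≤ m * (h - c) + h * (1 - c) := by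
  have hfactor : m * (h - c) + h * (1 - c) =
      m * (h - 2) * (h * (m - 1) + 2) / (h * m + 1 + 3) := by
    have : h * m + 1 + 3 ≠ 0 := by positivity
    rw [hc]
    field_simp
    ring
  rw [hfactor]
  have : 0 ≤ h - 2 := by linarith
  have : 0 ≤ m - 1 := by linarith
  positivity

theorem le_acd_of_degrees {G : Type} [One G] {S A : Set (G → ℂ)} (hS : S.Finite) (hAS : A ⊆ S)
    (hA : A.Nonempty) {h : ℕ} (hh : 2 ≤ h) (hdA : ∀ f ∈ A, (f 1).re = h)
    (hdS : ∀ f ∈ S, (f 1).re = 1 ∨ 2 ≤ (f 1).re) (hlin : {f ∈ S | (f 1).re = 1}.ncard ≤ h) :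
    2 * ((h * A.ncard + 1 : ℝ) + 1) / ((h * A.ncard + 1 : ℝ) + 3) ≤ acd S := by
  lift S to Finset (G → ℂ) using hS
  lift A to Finset (G → ℂ) using S.finite_toSet.subset hAS
  simp only [Finset.mem_coe, Finset.coe_subset, Finset.coe_nonempty, ← Finset.coe_filter,
    Set.ncard_coe_finset] at hAS hA hdA hdS hlin ⊢
  set c : ℝ := 2 * ((h * #A + 1 : ℝ) + 1) / ((h * #A + 1 : ℝ) + 3) with hc
  have hc1 : 1 ≤ c := by
    rw [hc, one_le_div (by positivity)]
    linarith [show (0 : ℝ) ≤ h * #A by positivity]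
  have hc2 : c ≤ 2 := by
    rw [hc, div_le_iff₀ (by positivity)]
    linarith
  have hexcess : 0 ≤ #A * (h - c) + h * (1 - c) :=
    mul_sub_add_mul_one_sub_nonneg (by exact_mod_cast hh) (by exact_mod_cast hA.card_pos) hc
  have hsum := le_sum_sub_of_eq_one_or_two_le hAS (by exact_mod_cast hh) hdA hdS hc2
  have hlin' : h * (1 - c) ≤ #{f ∈ S | (f 1).re = 1} * (1 - c) :=
    mul_le_mul_of_nonpos_right (by exact_mod_cast hlin) (by linarith)
  rw [Finset.sum_sub_distrib, Finset.sum_const, nsmul_eq_mul] at hsum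
  rw [acd_coe_finset, le_div_iff₀ (by exact_mod_cast (hA.mono hAS).card_pos)]
  linarith

end AverageDegree

section FrobeniusGroups

theorem ncard_linear_irr_le_of_fixedPointFree {N H : Type} [Group N] [Finite N] [Group H] [Finite H]
    {φ : H →* MulAut N} {h : H} (hh : FixedPointFree (φ h)) :
    {f ∈ Irr (N ⋊[φ] H) | (f 1).re = 1}.ncard ≤ Nat.card H := by
  have : Finite (N ⋊[φ] H) := Finite.of_equiv _ SemidirectProduct.equivProd.symm
  have hsub : {f ∈ Irr (N ⋊[φ] H) | (f 1).re = 1} ⊆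
      Set.range fun (χ : N ⋊[φ] H →* ℂˣ) g => (χ g : ℂ) := by
    rintro f ⟨hf, h1⟩
    obtain ⟨χ, rfl⟩ := exists_monoidHom_eq_of_re_apply_one_eq_one hf h1
    exact ⟨χ, rfl⟩
  calc {f ∈ Irr (N ⋊[φ] H) | (f 1).re = 1}.ncard
      ≤ (Set.range fun (χ : N ⋊[φ] H →* ℂˣ) g => (χ g : ℂ)).ncard := Set.ncard_le_ncard hsub
    _ ≤ Nat.card (N ⋊[φ] H →* ℂˣ) := Finite.card_range_le _
    _ ≤ Nat.card (H →* ℂˣ) :=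
        Nat.card_le_card_of_injective _ (hom_comp_inr_injective_of_fixedPointFree hh)
    _ ≤ Nat.card H := natCard_monoidHom_units_le H ℂ

theorem fixedPointFree_of_irreducible {V H : Type*} [Group V] [CommGroup H] {φ : H →* MulAut V}
    (hfaith : Function.Injective φ)
    (hirr : ∀ W : Subgroup V, (∀ h : H, ∀ w ∈ W, φ h w ∈ W) → W = ⊥ ∨ W = ⊤) {h : H} (hh : h ≠ 1) :
    FixedPointFree (φ h) := by
  let W : Subgroup V := (φ h).toMonoidHom.eqLocus (MonoidHom.id V)
  have hW (g : H) (w : V) (hw : φ h w = w) : φ h (φ g w) = φ g w := by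
    rw [← MulAut.mul_apply, ← map_mul, mul_comm, map_mul, MulAut.mul_apply, hw]
  rcases hirr W hW with hbot | htop
  · intro v hv
    exact Subgroup.mem_bot.mp (hbot ▸ show v ∈ W from hv)
  · refine absurd (hfaith ?_) hh
    rw [map_one]
    ext v
    exact show v ∈ W from htop ▸ Subgroup.mem_top v

theorem exponent_eq_of_forall_pow_prime_eq_one {G : Type*} [Group G] [Nontrivial G] {p : ℕ}
    (hp : p.Prime) (h : ∀ g : G, g ^ p = 1) : Monoid.exponent G = p :=
  ((Nat.dvd_prime hp).mp (Monoid.exponent_dvd_of_forall_pow_eq_one h)).resolve_left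
    fun h1 => not_subsingleton G (Monoid.exp_eq_one_iff.mp h1)

theorem abelian_semidirect_acd_ge_general
    {H V : Type} [Group H] [Finite H] [Nontrivial H] [CommGroup V] [Finite V] [Nontrivial V]
    {φ : H →* MulAut V} (hφ : ∀ h ≠ 1, FixedPointFree (φ h))
    {k : Subfield ℂ} (hk : ∀ ζ : ℂ, IsPrimitiveRoot ζ (Monoid.exponent V) → ζ ∈ k) :
    2 * ((Nat.card V : ℝ) + 1) / ((Nat.card V : ℝ) + 3) ≤
      acd {f ∈ Irr (V ⋊[φ] H) | ∀ g, f g ∈ k} := by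
  have : Finite (V ⋊[φ] H) := Finite.of_equiv _ SemidirectProduct.equivProd.symm
  obtain ⟨h, hh⟩ := exists_ne (1 : H)
  have hcard : Nat.card V ≤ Nat.card H * (inducedChar (K := ℂ) φ '' {1}ᶜ).ncard + 1 := by
    rw [← CommGroup.card_monoidHom_of_hasEnoughRootsOfUnity V ℂ]
    exact natCard_monoidHom_le_card_mul_ncard_inducedChar φ
  have hne : (inducedChar (K := ℂ) φ '' {1}ᶜ).Nonempty := by
    refine Set.nonempty_iff_ne_empty.mpr fun h0 => (Finite.one_lt_card (α := V)).not_ge ?_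
    simpa [h0] using hcard
  refine (two_mul_add_one_div_add_three_le (by positivity) (by exact_mod_cast hcard)).trans
    (le_acd_of_degrees (finite_irr.subset fun f hf => hf.1) ?_ hne Finite.one_lt_card ?_ ?_ ?_)
  · rintro _ ⟨χ, hχ, rfl⟩
    exact ⟨inducedChar_mem_irr hφ hχ, inducedChar_mem φ hk χ⟩
  · rintro _ ⟨χ, -, rfl⟩
    rw [inducedChar_one, Complex.natCast_re]
  · exact fun f hf => re_apply_one_eq_one_or_two_le hf.1
  · refine (Set.ncard_le_ncard ?_ (finite_irr.subset ?_)).trans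
      (ncard_linear_irr_le_of_fixedPointFree (hφ h hh))
    · exact fun f hf => ⟨hf.1.1, hf.2⟩
    · exact fun f hf => hf.1

end FrobeniusGroups

theorem abelian_semidirect_acd_ge
    (p a : ℕ) (hp : p.Prime) (ha : 0 < a)
    (H V : Type) [CommGroup H] [Fintype H] [Nontrivial H]
    [CommGroup V] [Fintype V] [Nontrivial V]
    (helem : ∀ v : V, v ^ p = 1) (hcard : Nat.card V = p ^ a)
    (φ : H →* MulAut V) (hfaith : Function.Injective φ)
    (hirr : ∀ W : Subgroup V, (∀ h : H, ∀ w ∈ W, φ h w ∈ W) → W = ⊥ ∨ W = ⊤)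
    (k : Subfield ℂ) (hk : ∀ ζ : ℂ, IsPrimitiveRoot ζ p → ζ ∈ k) :
    2 * ((p : ℝ) + 1) / ((p : ℝ) + 3) ≤
      acd {f ∈ Irr (V ⋊[φ] H) | ∀ g, f g ∈ k} := by
  have hpV : p ≤ Nat.card V := hcard ▸ Nat.le_self_pow ha.ne' p
  exact (two_mul_add_one_div_add_three_le p.cast_nonneg (Nat.cast_le.mpr hpV)).trans
    (abelian_semidirect_acd_ge_general (fun _ => fixedPointFree_of_irreducible hfaith hirr)
      (by rwa [exponent_eq_of_forall_pow_prime_eq_one hp helem]))
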